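/- arXiv:1703.10283 — 2 statements merged into one kernel-verified Lean document; each statement's English description precedes it below -/
import Mathlib

section
/- Let g : ℝ → (0,∞) be a strictly positive probability density and let (p_k)_{k≥1} be a sequence of nonnegative real numbers with Σ_{k=1}^∞ p_k < ∞ and with p_k > 0 for infinitely many k. Define d_{g,p}(X,Y) = Σ_{k=1}^∞ p_k ∫_{[0,1]^k} ∫_{ℝ^{2k}} |φ_{X,Y}(x_k; s_k, t_k) − φ_X(x_k; s_k) φ_Y(x_k; t_k)|² ∏_{j=1}^k g(s_j) g(t_j) ds_k dt_k dx_k. Then d_{g,p}(X,Y) = 0 if and only if the joint law of (X,Y) on C([0,1],ℝ) × C([0,1],ℝ) equals the product of the law of X and the law of Y. -/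
open MeasureTheory
open scoped unitInterval ENNReal

/-- The joint characteristic function of the finite-dimensional distribution of the pair
of processes `(X, Y)` at the points `x 0, …, x (k-1)` of `[0,1]`. -/
noncomputable def jointCF {Ω : Type*} [MeasurableSpace Ω] (ℙ : Measure Ω)
    (X Y : Ω → C(I, ℝ)) {k : ℕ} (x : Fin k → I) (s t : Fin k → ℝ) : ℂ :=
  ∫ ω, Complex.exp (Complex.I * ((∑ j, (s j * X ω (x j) + t j * Y ω (x j)) : ℝ) : ℂ)) ∂ℙ

/-- The characteristic function of the finite-dimensional distribution of the process `X`
at the points `x 0, …, x (k-1)` of `[0,1]`. -/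
noncomputable def margCF {Ω : Type*} [MeasurableSpace Ω] (ℙ : Measure Ω)
    (X : Ω → C(I, ℝ)) {k : ℕ} (x : Fin k → I) (s : Fin k → ℝ) : ℂ :=
  ∫ ω, Complex.exp (Complex.I * ((∑ j, s j * X ω (x j) : ℝ) : ℂ)) ∂ℙ

/-- The distance covariance of `X` and `Y` with weight function `g` and a general
sequence of coefficients `(p_k)_{k ≥ 1}` (the term of index `k : ℕ` below corresponds
to dimension `k + 1 ≥ 1` and carries the coefficient `p (k+1)`):
`d_{g,p}(X,Y) = Σ_{k≥1} p_k ∫_{[0,1]^k} ∫_{ℝ^{2k}} |φ_{X,Y} - φ_X φ_Y|² Π_j g(s_j)g(t_j) ds dt dx`. -/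
noncomputable def distCovP {Ω : Type*} [MeasurableSpace Ω] (ℙ : Measure Ω)
    (X Y : Ω → C(I, ℝ)) (g : ℝ → ℝ) (p : ℕ → ℝ) : ℝ≥0∞ :=
  ∑' k : ℕ,
    ENNReal.ofReal (p (k + 1)) *
      ∫⁻ (x : Fin (k + 1) → I),
        ∫⁻ (s : Fin (k + 1) → ℝ), ∫⁻ (t : Fin (k + 1) → ℝ),
          ENNReal.ofReal
            (‖jointCF ℙ X Y x s t - margCF ℙ X x s * margCF ℙ Y x t‖ ^ 2 *
              ∏ j, g (s j) * g (t j))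

theorem volI_openPos : Measure.IsOpenPosMeasure (volume : Measure I) := by
  constructor
  rintro U hU ⟨x, hx⟩ h0
  obtain ⟨V, hV, rfl⟩ := isOpen_induced_iff.1 hU
  have hcl : (x : ℝ) ∈ closure (Set.Ioo (0 : ℝ) 1) := by
    rw [closure_Ioo zero_ne_one]; exact x.2
  obtain ⟨y, hyV, hy⟩ := mem_closure_iff.1 hcl V hV hx
  have hpos : volume (V ∩ Set.Ioo (0 : ℝ) 1) ≠ 0 :=
    (hV.inter isOpen_Ioo).measure_ne_zero volume ⟨y, hyV, hy⟩
  apply hpos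
  rw [unitInterval.volume_apply] at h0
  refine measure_mono_null ?_ h0
  rintro z ⟨hzV, hz⟩
  exact ⟨⟨z, hz.1.le, hz.2.le⟩, hzV, rfl⟩

theorem eval_measurable {Ω : Type*} [MeasurableSpace Ω]
    [MeasurableSpace C(I, ℝ)] [BorelSpace C(I, ℝ)]
    {X : Ω → C(I, ℝ)} (hX : Measurable X) (x : I) : Measurable fun ω => X ω x :=
  (continuous_eval_const x).measurable.comp hX

theorem jointCF_continuous {Ω : Type*} [MeasurableSpace Ω] (ℙ : Measure Ω)
    [IsProbabilityMeasure ℙ] [MeasurableSpace C(I, ℝ)] [BorelSpace C(I, ℝ)]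
    (X Y : Ω → C(I, ℝ)) (hX : Measurable X) (hY : Measurable Y) (k : ℕ) :
    Continuous fun z : (Fin k → I) × (Fin k → ℝ) × (Fin k → ℝ) =>
      jointCF ℙ X Y z.1 z.2.1 z.2.2 := by
  unfold jointCF
  refine continuous_of_dominated (bound := fun _ => 1) ?_ ?_ (integrable_const _) ?_
  · intro z
    apply Measurable.aestronglyMeasurable
    have h1 := fun x => eval_measurable hX x
    have h2 := fun x => eval_measurable hY x
    fun_prop
  · intro z
    refine Filter.Eventually.of_forall fun ω => ?_
    rw [mul_comm, Complex.norm_exp_ofReal_mul_I]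
  · refine Filter.Eventually.of_forall fun ω => ?_
    have h1 := (X ω).continuous
    have h2 := (Y ω).continuous
    fun_prop

theorem margCF_eq {Ω : Type*} [MeasurableSpace Ω] (ℙ : Measure Ω)
    (X Y : Ω → C(I, ℝ)) {k : ℕ} (x : Fin k → I) (s : Fin k → ℝ) :
    margCF ℙ X x s = jointCF ℙ X Y x s 0 := by
  simp [margCF, jointCF]

theorem margCF_eq' {Ω : Type*} [MeasurableSpace Ω] (ℙ : Measure Ω)
    (X Y : Ω → C(I, ℝ)) {k : ℕ} (x : Fin k → I) (s : Fin k → ℝ) :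
    margCF ℙ Y x s = jointCF ℙ X Y x 0 s := by
  simp [margCF, jointCF]

theorem diff_continuous {Ω : Type*} [MeasurableSpace Ω] (ℙ : Measure Ω)
    [IsProbabilityMeasure ℙ] [MeasurableSpace C(I, ℝ)] [BorelSpace C(I, ℝ)]
    (X Y : Ω → C(I, ℝ)) (hX : Measurable X) (hY : Measurable Y) (k : ℕ) :
    Continuous fun z : (Fin k → I) × (Fin k → ℝ) × (Fin k → ℝ) =>
      jointCF ℙ X Y z.1 z.2.1 z.2.2 - margCF ℙ X z.1 z.2.1 * margCF ℙ Y z.1 z.2.2 := by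
  have h := jointCF_continuous ℙ X Y hX hY k
  have h1 : Continuous fun z : (Fin k → I) × (Fin k → ℝ) × (Fin k → ℝ) =>
      margCF ℙ X z.1 z.2.1 := by
    simp only [margCF_eq ℙ X Y]
    exact h.comp (g := fun z : (Fin k → I) × (Fin k → ℝ) × (Fin k → ℝ) =>
      jointCF ℙ X Y z.1 z.2.1 z.2.2) (f := fun z : (Fin k → I) × (Fin k → ℝ) × (Fin k → ℝ) => (z.1, z.2.1, 0)) (by fun_prop)
  have h2 : Continuous fun z : (Fin k → I) × (Fin k → ℝ) × (Fin k → ℝ) =>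
      margCF ℙ Y z.1 z.2.2 := by
    simp only [margCF_eq' ℙ X Y]
    exact h.comp (g := fun z : (Fin k → I) × (Fin k → ℝ) × (Fin k → ℝ) =>
      jointCF ℙ X Y z.1 z.2.1 z.2.2) (f := fun z : (Fin k → I) × (Fin k → ℝ) × (Fin k → ℝ) => (z.1, 0, z.2.2)) (by fun_prop)
  exact h.sub (h1.mul h2)

theorem cf_eq_of_lintegral_eq_zero {Ω : Type*} [MeasurableSpace Ω] (ℙ : Measure Ω)
    [IsProbabilityMeasure ℙ] [MeasurableSpace C(I, ℝ)] [BorelSpace C(I, ℝ)]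
    (X Y : Ω → C(I, ℝ)) (hX : Measurable X) (hY : Measurable Y)
    (g : ℝ → ℝ) (hg : Measurable g) (hg_pos : ∀ s, 0 < g s) (k : ℕ)
    (h : ∫⁻ (x : Fin k → I), ∫⁻ (s : Fin k → ℝ), ∫⁻ (t : Fin k → ℝ),
          ENNReal.ofReal
            (‖jointCF ℙ X Y x s t - margCF ℙ X x s * margCF ℙ Y x t‖ ^ 2 *
              ∏ j, g (s j) * g (t j)) = 0)
    (x : Fin k → I) (s t : Fin k → ℝ) :
    jointCF ℙ X Y x s t = margCF ℙ X x s * margCF ℙ Y x t := by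
  have hc := diff_continuous ℙ X Y hX hY k
  set F : (Fin k → I) × (Fin k → ℝ) × (Fin k → ℝ) → ℝ≥0∞ := fun z => ENNReal.ofReal
            (‖jointCF ℙ X Y z.1 z.2.1 z.2.2 - margCF ℙ X z.1 z.2.1 * margCF ℙ Y z.1 z.2.2‖ ^ 2 *
              ∏ j, g (z.2.1 j) * g (z.2.2 j)) with hF
  have hFm : Measurable F := by
    refine ENNReal.measurable_ofReal.comp ((hc.norm.pow 2).measurable.mul ?_)
    fun_prop
  have h' : ∫⁻ z, F z ∂((volume : Measure (Fin k → I)).prod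
      ((volume : Measure (Fin k → ℝ)).prod (volume : Measure (Fin k → ℝ)))) = 0 := by
    rw [lintegral_prod _ hFm.aemeasurable, ← h]
    refine lintegral_congr fun x => ?_
    rw [lintegral_prod _ (by fun_prop)]
  rw [lintegral_eq_zero_iff hFm] at h'
  have := volI_openPos
  have : Measure.IsOpenPosMeasure (volume : Measure (Fin k → I)) :=
    inferInstanceAs (Measure.IsOpenPosMeasure (Measure.pi fun _ => volume))
  have := (Continuous.ae_eq_iff_eq ((volume : Measure (Fin k → I)).prod
      ((volume : Measure (Fin k → ℝ)).prod (volume : Measure (Fin k → ℝ)))) hc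
      (continuous_const (y := (0 : ℂ)))).1 (by
    filter_upwards [h'] with z hz
    have hpos : 0 < ∏ j, g (z.2.1 j) * g (z.2.2 j) :=
      Finset.prod_pos fun j _ => mul_pos (hg_pos _) (hg_pos _)
    simp only [hF, Pi.zero_apply, ENNReal.ofReal_eq_zero] at hz
    by_contra hne
    have : 0 < ‖jointCF ℙ X Y z.1 z.2.1 z.2.2
        - margCF ℙ X z.1 z.2.1 * margCF ℙ Y z.1 z.2.2‖ := norm_pos_iff.2 hne
    have := mul_pos (pow_pos this 2) hpos
    linarith)
  exact sub_eq_zero.1 (congrFun this (x, s, t))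

open ProbabilityTheory in
theorem fin_indep {Ω : Type*} [MeasurableSpace Ω] (P : Measure Ω)
    [IsProbabilityMeasure P] [MeasurableSpace C(I, ℝ)] [BorelSpace C(I, ℝ)]
    (X Y : Ω → C(I, ℝ)) (hX : Measurable X) (hY : Measurable Y) (k : ℕ) (x : Fin k → I)
    (h : ∀ s t, jointCF P X Y x s t = margCF P X x s * margCF P Y x t) :
    IndepFun (fun ω j => X ω (x j)) (fun ω j => Y ω (x j)) P := by
  have h1 : Measurable fun ω j => X ω (x j) :=
    measurable_pi_lambda _ fun j => eval_measurable hX _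
  have h2 : Measurable fun ω j => Y ω (x j) :=
    measurable_pi_lambda _ fun j => eval_measurable hY _
  rw [indepFun_iff_charFunDual_prod h1.aemeasurable h2.aemeasurable]
  intro L
  have key : ∀ (M : (Fin k → ℝ) →L[ℝ] ℝ) (v : Fin k → ℝ),
      M v = ∑ j, M (Pi.single j 1) * v j := by
    intro M v
    conv_lhs => rw [pi_eq_sum_univ' v]
    simp [map_sum, mul_comm]
  have hL : ∀ a b, L (a, b) = (L.comp (.inl ℝ _ _)) a + (L.comp (.inr ℝ _ _)) b := by
    intro a b
    simp [← map_add]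
  have := h (fun j => L.comp (.inl ℝ _ _) (Pi.single j 1))
    (fun j => L.comp (.inr ℝ _ _) (Pi.single j 1))
  simp only [charFunDual_apply]
  rw [integral_map (h1.prodMk h2).aemeasurable (by fun_prop),
    integral_map h1.aemeasurable (by fun_prop), integral_map h2.aemeasurable (by fun_prop)]
  simp only [jointCF, margCF, Finset.sum_add_distrib, ← key] at this
  simp only [hL]
  simpa only [mul_comm Complex.I] using this

open ProbabilityTheory in
theorem full_indep {Ω : Type*} [MeasurableSpace Ω] (P : Measure Ω)
    [IsProbabilityMeasure P] [MeasurableSpace C(I, ℝ)] [BorelSpace C(I, ℝ)]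
    (X Y : Ω → C(I, ℝ)) (hX : Measurable X) (hY : Measurable Y)
    (h : ∀ N : ℕ, ∃ k, N ≤ k ∧ ∀ x : Fin k → I,
      IndepFun (fun ω j => X ω (x j)) (fun ω j => Y ω (x j)) P) :
    IndepFun X Y P := by
  let D := TopologicalSpace.denseSeq I
  let e : C(I, ℝ) → (ℕ → ℝ) := fun f n => f (D n)
  have he : MeasurableEmbedding e := by
    refine Continuous.measurableEmbedding
      (continuous_pi fun n => continuous_eval_const _) ?_
    intro f f' hff
    apply DFunLike.coe_injective
    refine (TopologicalSpace.denseRange_denseSeq I).equalizer f.continuous f'.continuous ?_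
    exact hff
  have hpr : IndepFun (fun ω n => X ω (D n)) (fun ω n => Y ω (D n)) P := by
    refine IndepFun.process_indepFun_process (fun n => eval_measurable hX _)
      (fun n => eval_measurable hY _) ?_
    intro A B
    obtain ⟨k, hk, hi⟩ := h ((A ∪ B).sup id + 1)
    have hlt : ∀ i ∈ A ∪ B, i < k := fun i hi =>
      lt_of_lt_of_le (Nat.lt_succ_of_le (Finset.le_sup (f := id) hi)) hk
    have hi' := hi (fun j => D j)
    exact hi'.comp
      (φ := fun (v : Fin k → ℝ) (i : A) => v ⟨i, hlt i (Finset.mem_union_left _ i.2)⟩)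
      (ψ := fun (v : Fin k → ℝ) (i : B) => v ⟨i, hlt i (Finset.mem_union_right _ i.2)⟩)
      (by fun_prop) (by fun_prop)
  rw [IndepFun_iff_Indep] at hpr ⊢
  have e1 : MeasurableSpace.comap (fun ω n => X ω (D n)) inferInstance
      = MeasurableSpace.comap X inferInstance := by
    rw [← he.comap_eq, MeasurableSpace.comap_comp]; rfl
  have e2 : MeasurableSpace.comap (fun ω n => Y ω (D n)) inferInstance
      = MeasurableSpace.comap Y inferInstance := by
    rw [← he.comap_eq, MeasurableSpace.comap_comp]; rfl
  rwa [← e1, ← e2]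

theorem cf_eq_of_prod {Ω : Type*} [MeasurableSpace Ω] (ℙ : Measure Ω)
    [IsProbabilityMeasure ℙ] [MeasurableSpace C(I, ℝ)] [BorelSpace C(I, ℝ)]
    (X Y : Ω → C(I, ℝ)) (hX : Measurable X) (hY : Measurable Y)
    (h : Measure.map (fun ω => (X ω, Y ω)) ℙ = (Measure.map X ℙ).prod (Measure.map Y ℙ))
    {k : ℕ} (x : Fin k → I) (s t : Fin k → ℝ) :
    jointCF ℙ X Y x s t = margCF ℙ X x s * margCF ℙ Y x t := by
  let F : (Fin k → ℝ) → C(I, ℝ) → ℂ := fun s f =>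
    Complex.exp (Complex.I * ((∑ j, s j * f (x j) : ℝ) : ℂ))
  have hF : ∀ s, Measurable (F s) := by
    intro s
    have := fun y => eval_measurable (measurable_id (α := C(I, ℝ))) y
    simp only [id] at this
    fun_prop
  have hm : ∀ s t, Measurable fun z : C(I, ℝ) × C(I, ℝ) => F s z.1 * F t z.2 := fun s t =>
    ((hF s).comp measurable_fst).mul ((hF t).comp measurable_snd)
  have h1 : margCF ℙ X x s = ∫ f, F s f ∂(Measure.map X ℙ) := by
    rw [integral_map hX.aemeasurable (hF s).aestronglyMeasurable]; rfl
  have h2 : margCF ℙ Y x t = ∫ f, F t f ∂(Measure.map Y ℙ) := by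
    rw [integral_map hY.aemeasurable (hF t).aestronglyMeasurable]; rfl
  rw [h1, h2, ← integral_prod_mul, ← h, integral_map (hX.prodMk hY).aemeasurable
    (Measurable.aestronglyMeasurable (hm s t))]
  simp only [jointCF, F, ← Complex.exp_add, Finset.sum_add_distrib, Complex.ofReal_add, mul_add]

/-- For a strictly positive probability density `g` on `ℝ` and any
summable sequence `(p_k)_{k≥1}` of nonnegative numbers with infinitely many positive
terms, `d_{g,p}(X,Y) = 0` iff the joint law of `(X,Y)` is the product of the laws. -/
theorem distCovP_eq_zero_iff_indep
    {Ω : Type*} [MeasurableSpace Ω] (ℙ : Measure Ω) [IsProbabilityMeasure ℙ]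
    [MeasurableSpace C(I, ℝ)] [BorelSpace C(I, ℝ)]
    (X Y : Ω → C(I, ℝ)) (hX : Measurable X) (hY : Measurable Y)
    (g : ℝ → ℝ) (hg : Measurable g) (hg_pos : ∀ s, 0 < g s)
    (hg_int : (∫ s, g s) = 1)
    (p : ℕ → ℝ) (hp_nonneg : ∀ k, 1 ≤ k → 0 ≤ p k)
    (hp_sum : Summable fun k => p (k + 1))
    (hp_inf : {k | 1 ≤ k ∧ 0 < p k}.Infinite) :
    distCovP ℙ X Y g p = 0
      ↔ Measure.map (fun ω => (X ω, Y ω)) ℙ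
          = (Measure.map X ℙ).prod (Measure.map Y ℙ) := by
  constructor
  · intro h
    rw [← ProbabilityTheory.indepFun_iff_map_prod_eq_prod_map_map hX.aemeasurable
      hY.aemeasurable]
    refine full_indep ℙ X Y hX hY fun N => ?_
    obtain ⟨k, ⟨hk1, hkp⟩, hk⟩ := hp_inf.exists_gt N
    refine ⟨k, hk.le, fun x => fin_indep ℙ X Y hX hY k x ?_⟩
    obtain ⟨m, rfl⟩ : ∃ m, k = m + 1 := ⟨k - 1, by omega⟩
    unfold distCovP at h
    have hm := ENNReal.tsum_eq_zero.1 h m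
    rcases mul_eq_zero.1 hm with h0 | h0
    · exact absurd (ENNReal.ofReal_eq_zero.1 h0) (not_le.2 hkp)
    · exact cf_eq_of_lintegral_eq_zero ℙ X Y hX hY g hg hg_pos (m + 1) h0 x
  · intro h
    simp [distCovP, cf_eq_of_prod ℙ X Y hX hY h]
end

section
/- Let g : ℝ → [0,∞) be a probability density and define ĝ : ℝ → ℂ by ĝ(u) = ∫_ℝ e^{isu} g(s) ds. Let (X',Y') be an independent copy of (X,Y), and let Y'', Y''' be independent copies of Y such that (X,Y), (X',Y'), Y'', Y''' are mutually independent. Then e · d_g(X,Y) = Re E[exp(∫_0^1 ĝ(X(x) − X'(x)) ĝ(Y(x) − Y'(x)) dx)] + Re E[exp(∫_0^1 ĝ(X(x) − X'(x)) ĝ(Y''(x) − Y'''(x)) dx)] − 2 Re E[exp(∫_0^1 ĝ(X(x) − X'(x)) ĝ(Y(x) − Y''(x)) dx)]. -/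
open MeasureTheory
open scoped unitInterval ENNReal

/-- The distance covariance `d_g(X,Y)` of two stochastic processes `X, Y` with continuous
sample paths on `[0,1]`, with weight function `g`:
`d_g(X,Y) = Σ_{k≥1} (e^{-1}/k!) ∫_{[0,1]^k} ∫_{ℝ^{2k}} |φ_{X,Y} - φ_X φ_Y|² Π_j g(s_j)g(t_j) ds dt dx`. -/
noncomputable def distCov {Ω : Type*} [MeasurableSpace Ω] (ℙ : Measure Ω)
    (X Y : Ω → C(I, ℝ)) (g : ℝ → ℝ) : ℝ≥0∞ :=
  ∑' k : ℕ,
    ENNReal.ofReal (Real.exp (-1) / (Nat.factorial (k + 1) : ℝ)) *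
      ∫⁻ (x : Fin (k + 1) → I),
        ∫⁻ (s : Fin (k + 1) → ℝ), ∫⁻ (t : Fin (k + 1) → ℝ),
          ENNReal.ofReal
            (‖jointCF ℙ X Y x s t - margCF ℙ X x s * margCF ℙ Y x t‖ ^ 2 *
              ∏ j, g (s j) * g (t j))

section aux

noncomputable def nuG (g : ℝ → ℝ) : Measure ℝ := volume.withDensity (fun s => ENNReal.ofReal (g s))

lemma integrable_g (g : ℝ → ℝ) (hg_int : (∫ s, g s) = 1) : Integrable g := by
  by_contra h
  rw [integral_undef h] at hg_int
  exact zero_ne_one hg_int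

lemma nuG_prob (g : ℝ → ℝ) (hg_nonneg : ∀ s, 0 ≤ g s)
    (hg_int : (∫ s, g s) = 1) : IsProbabilityMeasure (nuG g) := by
  constructor
  rw [nuG, withDensity_apply _ MeasurableSet.univ, Measure.restrict_univ,
    ← ofReal_integral_eq_lintegral_ofReal (integrable_g g hg_int) (ae_of_all _ hg_nonneg), hg_int]
  simp

lemma pi_nuG (g : ℝ → ℝ) (hg : Measurable g) (hg_nonneg : ∀ s, 0 ≤ g s)
    (hg_int : (∫ s, g s) = 1) (k : ℕ) :
    Measure.pi (fun _ : Fin k => nuG g) =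
      (volume : Measure (Fin k → ℝ)).withDensity (fun s => ENNReal.ofReal (∏ j, g (s j))) := by
  have := nuG_prob g hg_nonneg hg_int
  apply Measure.pi_eq
  intro A hA
  have hi : ∀ j, Integrable ((A j).indicator g) := fun j => (integrable_g g hg_int).indicator (hA j)
  have hn : ∀ j x, 0 ≤ (A j).indicator g x := fun j x =>
    Set.indicator_nonneg (fun s _ => hg_nonneg s) x
  have hm : MeasurableSet (Set.univ.pi A) := MeasurableSet.univ_pi hA
  rw [withDensity_apply _ hm, ← lintegral_indicator hm]
  have h1 : ∀ s : Fin k → ℝ, (Set.univ.pi A).indicator (fun s => ENNReal.ofReal (∏ j, g (s j))) s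
      = ENNReal.ofReal (∏ j, (A j).indicator g (s j)) := by
    intro s
    by_cases hs : s ∈ Set.univ.pi A
    · rw [Set.indicator_of_mem hs]
      congr 1
      apply Finset.prod_congr rfl
      intro j _
      rw [Set.indicator_of_mem (hs j (Set.mem_univ j))]
    · rw [Set.indicator_of_notMem hs]
      have : ∃ j, s j ∉ A j := by
        by_contra hc
        push Not at hc
        exact hs (fun j _ => hc j)
      obtain ⟨j, hj⟩ := this
      rw [Finset.prod_eq_zero (Finset.mem_univ j) (Set.indicator_of_notMem hj _)]
      simp
  simp_rw [h1]
  have hip : Integrable (fun s : Fin k → ℝ => ∏ j, (A j).indicator g (s j)) volume :=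
    Integrable.fintype_prod hi
  rw [← ofReal_integral_eq_lintegral_ofReal hip
      (ae_of_all _ (fun s => Finset.prod_nonneg (fun j _ => hn j _))),
    integral_fintype_prod_volume_eq_prod (fun j => (A j).indicator g),
    ENNReal.ofReal_prod_of_nonneg (fun j _ => integral_nonneg (hn j))]
  apply Finset.prod_congr rfl
  intro j _
  rw [nuG, withDensity_apply _ (hA j), integral_indicator (hA j),
    ofReal_integral_eq_lintegral_ofReal ((integrable_g g hg_int).integrableOn)
      (ae_of_all _ hg_nonneg)]

noncomputable def RG (g : ℝ → ℝ) (k : ℕ) : Measure ((Fin k → I) × (Fin k → ℝ) × (Fin k → ℝ)) :=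
  (volume : Measure (Fin k → I)).prod
    ((Measure.pi (fun _ : Fin k => nuG g)).prod (Measure.pi (fun _ : Fin k => nuG g)))

lemma RG_prob (g : ℝ → ℝ) (hg_nonneg : ∀ s, 0 ≤ g s)
    (hg_int : (∫ s, g s) = 1) (k : ℕ) : IsProbabilityMeasure (RG g k) := by
  have := nuG_prob g hg_nonneg hg_int
  unfold RG
  infer_instance

lemma lintegral_RG (g : ℝ → ℝ) (hg : Measurable g) (hg_nonneg : ∀ s, 0 ≤ g s)
    (hg_int : (∫ s, g s) = 1) (k : ℕ) (D : (Fin k → I) → (Fin k → ℝ) → (Fin k → ℝ) → ℝ)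
    (hD : Measurable (fun z : (Fin k → I) × (Fin k → ℝ) × (Fin k → ℝ) => D z.1 z.2.1 z.2.2)) :
    ∫⁻ x, ∫⁻ s, ∫⁻ t, ENNReal.ofReal (D x s t * ∏ j, g (s j) * g (t j))
      = ∫⁻ z, ENNReal.ofReal (D z.1 z.2.1 z.2.2) ∂(RG g k) := by
  have := nuG_prob g hg_nonneg hg_int
  have hG : Measurable (fun s : Fin k → ℝ => ENNReal.ofReal (∏ j, g (s j))) := by fun_prop
  rw [RG, lintegral_prod _ (by fun_prop)]
  congr 1; ext x
  have hDx : Measurable (fun z : (Fin k → ℝ) × (Fin k → ℝ) => D x z.1 z.2) :=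
    hD.comp (measurable_const.prodMk measurable_id)
  rw [lintegral_prod _ (by fun_prop), pi_nuG g hg hg_nonneg hg_int k,
    lintegral_withDensity_eq_lintegral_mul₀ hG.aemeasurable]
  swap
  · apply Measurable.aemeasurable
    have : SFinite ((volume : Measure (Fin k → ℝ)).withDensity
      (fun s => ENNReal.ofReal (∏ j, g (s j)))) := by
        rw [← pi_nuG g hg hg_nonneg hg_int k]; infer_instance
    apply Measurable.lintegral_prod_right'
      (f := fun z : (Fin k → ℝ) × (Fin k → ℝ) => ENNReal.ofReal (D x z.1 z.2))
    fun_prop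
  congr 1; ext s
  have hDs : Measurable (fun t : (Fin k → ℝ) => D x s t) :=
    hDx.comp (measurable_const.prodMk measurable_id)
  rw [Pi.mul_apply, lintegral_withDensity_eq_lintegral_mul₀ hG.aemeasurable (by fun_prop),
    ← lintegral_const_mul _ (by fun_prop)]
  congr 1; ext t
  have hp : ∀ s : Fin k → ℝ, 0 ≤ ∏ j, g (s j) := fun s => Finset.prod_nonneg fun j _ => hg_nonneg _
  rw [Pi.mul_apply, ← ENNReal.ofReal_mul (hp t), ← ENNReal.ofReal_mul (hp s), Finset.prod_mul_distrib]
  congr 1; ring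

lemma gHat_eq (g : ℝ → ℝ) (hg : Measurable g) (hg_nonneg : ∀ s, 0 ≤ g s) (u : ℝ) :
    ∫ s : ℝ, Complex.exp (Complex.I * ((s * u : ℝ) : ℂ)) * (g s : ℂ)
      = ∫ s, Complex.exp (Complex.I * ((s * u : ℝ) : ℂ)) ∂(nuG g) := by
  rw [nuG, integral_withDensity_eq_integral_toReal_smul (by fun_prop)
    (ae_of_all _ (fun _ => ENNReal.ofReal_lt_top))]
  congr 1; ext s
  rw [ENNReal.toReal_ofReal (hg_nonneg s), Complex.real_smul, mul_comm]

lemma norm_exp_I (r : ℝ) : ‖Complex.exp (Complex.I * (r : ℂ))‖ = 1 := by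
  rw [mul_comm, Complex.norm_exp_ofReal_mul_I]

lemma norm_int_le {Θ : Type*} [MeasurableSpace Θ] (Q : Measure Θ) [IsProbabilityMeasure Q]
    (f : Θ → ℂ) (hf : ∀ θ, ‖f θ‖ ≤ 1) : ‖∫ θ, f θ ∂Q‖ ≤ 1 := by
  have := norm_integral_le_of_norm_le_const (μ := Q) (ae_of_all _ hf)
  simpa using this

lemma integrable_bdd {Θ : Type*} [MeasurableSpace Θ] (Q : Measure Θ) [IsProbabilityMeasure Q]
    (f : Θ → ℂ) (hm : Measurable f) (hf : ∀ θ, ‖f θ‖ ≤ 1) : Integrable f Q :=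
  Integrable.of_bound hm.aestronglyMeasurable 1 (ae_of_all _ hf)

lemma phase_meas {Θ : Type*} [MeasurableSpace Θ] (a b : Θ → I → ℝ)
    (ha : Measurable (fun p : Θ × I => a p.1 p.2)) (hb : Measurable (fun p : Θ × I => b p.1 p.2))
    (k : ℕ) : Measurable (fun p : ((Fin k → I) × (Fin k → ℝ) × (Fin k → ℝ)) × Θ =>
      Complex.exp (Complex.I * ((∑ j, (p.1.2.1 j * a p.2 (p.1.1 j)
        + p.1.2.2 j * b p.2 (p.1.1 j)) : ℝ) : ℂ))) := by
  have h1 : ∀ j, Measurable (fun p : ((Fin k → I) × (Fin k → ℝ) × (Fin k → ℝ)) × Θ =>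
      a p.2 (p.1.1 j)) := fun j => ha.comp (f := fun p : ((Fin k → I) × (Fin k → ℝ) × (Fin k → ℝ)) × Θ => (p.2, p.1.1 j)) (by fun_prop)
  have h2 : ∀ j, Measurable (fun p : ((Fin k → I) × (Fin k → ℝ) × (Fin k → ℝ)) × Θ =>
      b p.2 (p.1.1 j)) := fun j => hb.comp (f := fun p : ((Fin k → I) × (Fin k → ℝ) × (Fin k → ℝ)) × Θ => (p.2, p.1.1 j)) (by fun_prop)
  fun_prop

noncomputable def PhiG {Θ : Type*} [MeasurableSpace Θ] (Q : Measure Θ) (a b : Θ → I → ℝ)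
    {k : ℕ} (z : (Fin k → I) × (Fin k → ℝ) × (Fin k → ℝ)) : ℂ :=
  ∫ θ, Complex.exp (Complex.I * ((∑ j, (z.2.1 j * a θ (z.1 j)
        + z.2.2 j * b θ (z.1 j)) : ℝ) : ℂ)) ∂Q

lemma PhiG_meas {Θ : Type*} [MeasurableSpace Θ] (Q : Measure Θ) [IsProbabilityMeasure Q]
    (a b : Θ → I → ℝ)
    (ha : Measurable (fun p : Θ × I => a p.1 p.2)) (hb : Measurable (fun p : Θ × I => b p.1 p.2))
    (k : ℕ) : Measurable (PhiG Q a b (k := k)) := by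
  have := (phase_meas a b ha hb k).stronglyMeasurable.integral_prod_right' (ν := Q)
  exact this.measurable

lemma PhiG_norm {Θ : Type*} [MeasurableSpace Θ] (Q : Measure Θ) [IsProbabilityMeasure Q]
    (a b : Θ → I → ℝ) {k : ℕ} (z : (Fin k → I) × (Fin k → ℝ) × (Fin k → ℝ)) :
    ‖PhiG Q a b z‖ ≤ 1 :=
  norm_int_le Q _ (fun _ => (norm_exp_I _).le)

set_option maxHeartbeats 1000000 in
lemma PhiG_integral {Θ : Type*} [MeasurableSpace Θ] (Q : Measure Θ) [IsProbabilityMeasure Q]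
    (a b : Θ → I → ℝ)
    (ha : Measurable (fun p : Θ × I => a p.1 p.2)) (hb : Measurable (fun p : Θ × I => b p.1 p.2))
    (g : ℝ → ℝ) (hg : Measurable g) (hg_nonneg : ∀ s, 0 ≤ g s)
    (hg_int : (∫ s, g s) = 1) 
    (gHat : ℝ → ℂ) (hgHat : ∀ u, gHat u = ∫ s : ℝ, Complex.exp (Complex.I * ((s * u : ℝ) : ℂ)) * (g s : ℂ))
    (k : ℕ) :
    ∫ z, PhiG Q a b z ∂(RG g k) = ∫ θ, (∫ x : I, gHat (a θ x) * gHat (b θ x)) ^ k ∂Q := by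
  have := nuG_prob g hg_nonneg hg_int
  have := RG_prob g hg_nonneg hg_int k
  have hm := phase_meas a b ha hb k
  unfold PhiG
  have hint := integrable_bdd ((RG g k).prod Q) _ hm (fun _ => (norm_exp_I _).le)
  rw [integral_integral_swap hint]
  congr 1; ext θ
  have hmθ : Measurable (fun z : ((Fin k → I) × (Fin k → ℝ) × (Fin k → ℝ)) =>
      Complex.exp (Complex.I * ((∑ j, (z.2.1 j * a θ (z.1 j)
        + z.2.2 j * b θ (z.1 j)) : ℝ) : ℂ))) :=
    hm.comp (measurable_id.prodMk measurable_const)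
  rw [RG, integral_prod _ (integrable_bdd _ _ hmθ (fun _ => (norm_exp_I _).le))]
  have key : ∀ x : Fin k → I, ∫ (y : (Fin k → ℝ) × (Fin k → ℝ)), Complex.exp (Complex.I * ((∑ j, (y.1 j * a θ (x j)
        + y.2 j * b θ (x j)) : ℝ) : ℂ)) ∂((Measure.pi (fun _ : Fin k => nuG g)).prod (Measure.pi (fun _ : Fin k => nuG g)))
      = ∏ j, (gHat (a θ (x j)) * gHat (b θ (x j))) := by
    intro x
    have h1 : ∀ y : (Fin k → ℝ) × (Fin k → ℝ), Complex.exp (Complex.I * ((∑ j, (y.1 j * a θ (x j)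
        + y.2 j * b θ (x j)) : ℝ) : ℂ)) =
        (∏ j, Complex.exp (Complex.I * ((y.1 j * a θ (x j) : ℝ) : ℂ))) *
        (∏ j, Complex.exp (Complex.I * ((y.2 j * b θ (x j) : ℝ) : ℂ))) := by
      intro y
      rw [← Complex.exp_sum, ← Complex.exp_sum, ← Complex.exp_add, Finset.sum_add_distrib]
      push_cast
      rw [mul_add, Finset.mul_sum, Finset.mul_sum]
    simp_rw [h1]
    rw [integral_prod_mul (fun y : Fin k → ℝ => ∏ j, Complex.exp (Complex.I * ((y j * a θ (x j) : ℝ) : ℂ)))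
      (fun y : Fin k → ℝ => ∏ j, Complex.exp (Complex.I * ((y j * b θ (x j) : ℝ) : ℂ))),
      integral_fintype_prod_eq_prod (fun j (y : ℝ) => Complex.exp (Complex.I * ((y * a θ (x j) : ℝ) : ℂ))),
      integral_fintype_prod_eq_prod (fun j (y : ℝ) => Complex.exp (Complex.I * ((y * b θ (x j) : ℝ) : ℂ))),
      Finset.prod_mul_distrib]
    simp_rw [hgHat, gHat_eq g hg hg_nonneg]
  simp only [key]
  rw [integral_fintype_prod_volume_eq_pow (fun x => gHat (a θ x) * gHat (b θ x))]
  simp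

lemma PhiG_hasSum {Θ : Type*} [MeasurableSpace Θ] (Q : Measure Θ) [IsProbabilityMeasure Q]
    (a b : Θ → I → ℝ)
    (ha : Measurable (fun p : Θ × I => a p.1 p.2)) (hb : Measurable (fun p : Θ × I => b p.1 p.2))
    (g : ℝ → ℝ) (hg : Measurable g) (hg_nonneg : ∀ s, 0 ≤ g s)
    (hg_int : (∫ s, g s) = 1) 
    (gHat : ℝ → ℂ) (hgHat : ∀ u, gHat u = ∫ s : ℝ, Complex.exp (Complex.I * ((s * u : ℝ) : ℂ)) * (g s : ℂ)) :
    HasSum (fun k : ℕ => (1 / (k.factorial : ℝ)) * (∫ z, PhiG Q a b z ∂(RG g k)).re)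
      (∫ θ, Complex.exp (∫ x : I, gHat (a θ x) * gHat (b θ x)) ∂Q).re := by
  have := nuG_prob g hg_nonneg hg_int
  have hgm : Measurable gHat := by
    have h : Measurable (fun p : ℝ × ℝ => Complex.exp (Complex.I * ((p.2 * p.1 : ℝ) : ℂ))) := by
      fun_prop
    have := (h.stronglyMeasurable.integral_prod_right' (ν := nuG g)).measurable
    convert this using 1
    ext u
    rw [hgHat, gHat_eq g hg hg_nonneg]
  have hgn : ∀ u, ‖gHat u‖ ≤ 1 := by
    intro u
    rw [hgHat, gHat_eq g hg hg_nonneg]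
    exact norm_int_le _ _ (fun _ => (norm_exp_I _).le)
  have hcm : Measurable (fun θ => ∫ x : I, gHat (a θ x) * gHat (b θ x)) := by
    have h : Measurable (fun p : Θ × I => gHat (a p.1 p.2) * gHat (b p.1 p.2)) :=
      (hgm.comp ha).mul (hgm.comp hb)
    exact (h.stronglyMeasurable.integral_prod_right' (ν := (volume : Measure I))).measurable
  have hcn : ∀ θ, ‖∫ x : I, gHat (a θ x) * gHat (b θ x)‖ ≤ 1 := by
    intro θ
    apply norm_int_le
    intro x
    rw [norm_mul]
    exact mul_le_one₀ (hgn _) (norm_nonneg _) (hgn _)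
  have hs : Summable (fun k : ℕ => 1 / (k.factorial : ℝ)) := by
    simpa using Real.summable_pow_div_factorial 1
  have := hasSum_integral_of_dominated_convergence (μ := Q)
    (F := fun (k : ℕ) θ => (∫ x : I, gHat (a θ x) * gHat (b θ x)) ^ k / (k.factorial : ℂ))
    (f := fun θ => Complex.exp (∫ x : I, gHat (a θ x) * gHat (b θ x)))
    (fun k _ => 1 / (k.factorial : ℝ))
    (fun k => ((hcm.pow_const k).div_const _).aestronglyMeasurable)
    (fun k => ae_of_all _ (fun θ => by
      rw [norm_div, norm_pow, Complex.norm_natCast]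
      gcongr
      exact pow_le_one₀ (norm_nonneg _) (hcn θ)))
    (ae_of_all _ (fun _ => hs))
    (integrable_const _)
    (ae_of_all _ (fun θ => by
      rw [Complex.exp_eq_exp_ℂ]
      exact NormedSpace.expSeries_div_hasSum_exp _))
  have h2 := Complex.hasSum_re this
  convert h2 using 2 with k
  rw [PhiG_integral Q a b ha hb g hg hg_nonneg hg_int gHat hgHat, integral_div,
    Complex.div_natCast_re]
  ring

lemma eI_add (r s : ℝ) : Complex.exp (Complex.I * ((r + s : ℝ) : ℂ))
    = Complex.exp (Complex.I * (r : ℂ)) * Complex.exp (Complex.I * (s : ℂ)) := by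
  rw [← Complex.exp_add]; push_cast; rw [mul_add]

lemma eI_conj (r : ℝ) : (starRingEnd ℂ) (Complex.exp (Complex.I * (r : ℂ)))
    = Complex.exp (Complex.I * ((-r : ℝ) : ℂ)) := by
  rw [← Complex.exp_conj]; simp

lemma Phi1_eq {Ω : Type*} [MeasurableSpace Ω] (ℙ : Measure Ω) [IsProbabilityMeasure ℙ]
    (X Y : Ω → C(I, ℝ)) {k : ℕ} (z : (Fin k → I) × (Fin k → ℝ) × (Fin k → ℝ)) :
    PhiG (ℙ.prod ℙ) (fun ω x => X ω.1 x - X ω.2 x) (fun ω x => Y ω.1 x - Y ω.2 x) z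
      = jointCF ℙ X Y z.1 z.2.1 z.2.2 * (starRingEnd ℂ) (jointCF ℙ X Y z.1 z.2.1 z.2.2) := by
  unfold PhiG jointCF
  rw [← integral_conj, ← integral_prod_mul]
  congr 1; ext ω
  rw [eI_conj, ← eI_add]
  congr 3
  simp only [mul_sub, Finset.sum_add_distrib, Finset.sum_sub_distrib]
  ring

lemma Phi2_eq {Ω : Type*} [MeasurableSpace Ω] (ℙ : Measure Ω) [IsProbabilityMeasure ℙ]
    (X Y : Ω → C(I, ℝ)) {k : ℕ} (z : (Fin k → I) × (Fin k → ℝ) × (Fin k → ℝ)) :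
    PhiG ((ℙ.prod ℙ).prod (ℙ.prod ℙ)) (fun ω x => X ω.1.1 x - X ω.1.2 x)
        (fun ω x => Y ω.2.1 x - Y ω.2.2 x) z
      = (margCF ℙ X z.1 z.2.1 * (starRingEnd ℂ) (margCF ℙ X z.1 z.2.1)) *
        (margCF ℙ Y z.1 z.2.2 * (starRingEnd ℂ) (margCF ℙ Y z.1 z.2.2)) := by
  unfold PhiG margCF
  rw [← integral_conj, ← integral_conj, ← integral_prod_mul, ← integral_prod_mul,
    ← integral_prod_mul]
  congr 1; ext ω
  rw [eI_conj, eI_conj, ← eI_add, ← eI_add, ← eI_add]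
  congr 3
  simp only [mul_sub, Finset.sum_add_distrib, Finset.sum_sub_distrib]
  ring

lemma Phi3_eq {Ω : Type*} [MeasurableSpace Ω] (ℙ : Measure Ω) [IsProbabilityMeasure ℙ]
    (X Y : Ω → C(I, ℝ)) {k : ℕ} (z : (Fin k → I) × (Fin k → ℝ) × (Fin k → ℝ)) :
    PhiG (ℙ.prod (ℙ.prod ℙ)) (fun ω x => X ω.1 x - X ω.2.1 x)
        (fun ω x => Y ω.1 x - Y ω.2.2 x) z
      = jointCF ℙ X Y z.1 z.2.1 z.2.2 * ((starRingEnd ℂ) (margCF ℙ X z.1 z.2.1) *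
        (starRingEnd ℂ) (margCF ℙ Y z.1 z.2.2)) := by
  unfold PhiG margCF jointCF
  rw [← integral_conj, ← integral_conj, ← integral_prod_mul, ← integral_prod_mul]
  congr 1; ext ω
  rw [eI_conj, eI_conj, ← eI_add, ← eI_add]
  congr 3
  simp only [mul_sub, Finset.sum_add_distrib, Finset.sum_sub_distrib]
  ring

lemma normsq_expand (J A B : ℂ) : ‖J - A * B‖ ^ 2 =
    (J * (starRingEnd ℂ) J).re + ((A * (starRingEnd ℂ) A) * (B * (starRingEnd ℂ) B)).re
      - 2 * (J * ((starRingEnd ℂ) A * (starRingEnd ℂ) B)).re := by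
  rw [Complex.sq_norm, Complex.normSq_apply]
  simp only [Complex.sub_re, Complex.sub_im, Complex.mul_re, Complex.mul_im, Complex.conj_re,
    Complex.conj_im]
  ring

lemma integral_comb {Θ : Type*} [MeasurableSpace Θ] (Q : Measure Θ) (f1 f2 f3 : Θ → ℂ)
    (h1 : Integrable f1 Q) (h2 : Integrable f2 Q) (h3 : Integrable f3 Q) :
    ∫ z, ((f1 z).re + (f2 z).re - 2 * (f3 z).re) ∂Q
      = (∫ z, f1 z ∂Q).re + (∫ z, f2 z ∂Q).re - 2 * (∫ z, f3 z ∂Q).re := by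
  have r1 : Integrable (fun z => (f1 z).re) Q := h1.re
  have r2 : Integrable (fun z => (f2 z).re) Q := h2.re
  have r3 : Integrable (fun z => (f3 z).re) Q := h3.re
  have e1 : ∫ z, (f1 z).re ∂Q = (∫ z, f1 z ∂Q).re := integral_re h1
  have e2 : ∫ z, (f2 z).re ∂Q = (∫ z, f2 z ∂Q).re := integral_re h2
  have e3 : ∫ z, (f3 z).re ∂Q = (∫ z, f3 z ∂Q).re := integral_re h3
  have r12 : Integrable (fun z => (f1 z).re + (f2 z).re) Q := r1.add r2
  rw [integral_sub r12 (r3.const_mul 2), integral_add r1 r2, integral_const_mul, e1, e2, e3]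

end aux


/-- Representation of the distance covariance: with
`gHat(u) = ∫ e^{isu} g(s) ds` and independent copies realized on product spaces
(`(X',Y')` an independent copy of `(X,Y)` given by the second `Ω`-coordinate, and
`Y'', Y'''` independent copies of `Y` given by further independent coordinates),
`e · d_g(X,Y) = Re E[exp(∫₀¹ gHat(X−X')gHat(Y−Y'))] + Re E[exp(∫₀¹ gHat(X−X')gHat(Y''−Y'''))]
− 2 Re E[exp(∫₀¹ gHat(X−X')gHat(Y−Y''))]`. -/
theorem distCov_representation
    {Ω : Type*} [MeasurableSpace Ω] (ℙ : Measure Ω) [IsProbabilityMeasure ℙ]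
    [MeasurableSpace C(I, ℝ)] [BorelSpace C(I, ℝ)]
    (X Y : Ω → C(I, ℝ)) (hX : Measurable X) (hY : Measurable Y)
    (g : ℝ → ℝ) (hg : Measurable g) (hg_nonneg : ∀ s, 0 ≤ g s)
    (hg_int : (∫ s, g s) = 1)
    (gHat : ℝ → ℂ) (hgHat : ∀ u, gHat u = ∫ s : ℝ, Complex.exp (Complex.I * ((s * u : ℝ) : ℂ)) * (g s : ℂ)) :
    Real.exp 1 * (distCov ℙ X Y g).toReal =
      (∫ ω : Ω × Ω,
          Complex.exp (∫ x : I, gHat (X ω.1 x - X ω.2 x) * gHat (Y ω.1 x - Y ω.2 x))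
          ∂(ℙ.prod ℙ)).re
      + (∫ ω : (Ω × Ω) × Ω × Ω,
          Complex.exp (∫ x : I, gHat (X ω.1.1 x - X ω.1.2 x) * gHat (Y ω.2.1 x - Y ω.2.2 x))
          ∂((ℙ.prod ℙ).prod (ℙ.prod ℙ))).re
      - 2 * (∫ ω : Ω × Ω × Ω,
          Complex.exp (∫ x : I, gHat (X ω.1 x - X ω.2.1 x) * gHat (Y ω.1 x - Y ω.2.2 x))
          ∂(ℙ.prod (ℙ.prod ℙ))).re := by
  have hev : ∀ Z : Ω → C(I, ℝ), Measurable Z → Measurable (fun p : Ω × I => Z p.1 p.2) := by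
    intro Z hZ
    have h : Continuous (fun p : C(I, ℝ) × I => p.1 p.2) := continuous_eval
    exact h.measurable.comp ((hZ.comp measurable_fst).prodMk measurable_snd)
  have hsub : ∀ Z : Ω → C(I, ℝ), Measurable Z → ∀ {Θ : Type _} [MeasurableSpace Θ]
      (u v : Θ → Ω), Measurable u → Measurable v →
      Measurable (fun p : Θ × I => Z (u p.1) p.2 - Z (v p.1) p.2) := by
    intro Z hZ Θ _ u v hu hv
    exact ((hev Z hZ).comp ((hu.comp measurable_fst).prodMk measurable_snd)).sub
      ((hev Z hZ).comp ((hv.comp measurable_fst).prodMk measurable_snd))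
  have a1 := hsub X hX (Θ := Ω × Ω) Prod.fst Prod.snd (by fun_prop) (by fun_prop)
  have b1 := hsub Y hY (Θ := Ω × Ω) Prod.fst Prod.snd (by fun_prop) (by fun_prop)
  have a2 := hsub X hX (Θ := (Ω × Ω) × Ω × Ω) (fun ω => ω.1.1) (fun ω => ω.1.2)
    (by fun_prop) (by fun_prop)
  have b2 := hsub Y hY (Θ := (Ω × Ω) × Ω × Ω) (fun ω => ω.2.1) (fun ω => ω.2.2)
    (by fun_prop) (by fun_prop)
  have a3 := hsub X hX (Θ := Ω × Ω × Ω) (fun ω => ω.1) (fun ω => ω.2.1)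
    (by fun_prop) (by fun_prop)
  have b3 := hsub Y hY (Θ := Ω × Ω × Ω) (fun ω => ω.1) (fun ω => ω.2.2)
    (by fun_prop) (by fun_prop)
  have s1 := PhiG_hasSum (ℙ.prod ℙ) (fun ω x => X ω.1 x - X ω.2 x)
    (fun ω x => Y ω.1 x - Y ω.2 x) a1 b1 g hg hg_nonneg hg_int gHat hgHat
  have s2 := PhiG_hasSum ((ℙ.prod ℙ).prod (ℙ.prod ℙ)) (fun ω x => X ω.1.1 x - X ω.1.2 x)
    (fun ω x => Y ω.2.1 x - Y ω.2.2 x) a2 b2 g hg hg_nonneg hg_int gHat hgHat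
  have s3 := PhiG_hasSum (ℙ.prod (ℙ.prod ℙ)) (fun ω x => X ω.1 x - X ω.2.1 x)
    (fun ω x => Y ω.1 x - Y ω.2.2 x) a3 b3 g hg hg_nonneg hg_int gHat hgHat
  have m1 := PhiG_meas (ℙ.prod ℙ) (fun ω x => X ω.1 x - X ω.2 x)
    (fun ω x => Y ω.1 x - Y ω.2 x) a1 b1
  have m2 := PhiG_meas ((ℙ.prod ℙ).prod (ℙ.prod ℙ)) (fun ω x => X ω.1.1 x - X ω.1.2 x)
    (fun ω x => Y ω.2.1 x - Y ω.2.2 x) a2 b2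
  have m3 := PhiG_meas (ℙ.prod (ℙ.prod ℙ)) (fun ω x => X ω.1 x - X ω.2.1 x)
    (fun ω x => Y ω.1 x - Y ω.2.2 x) a3 b3
  have hprob := RG_prob g hg_nonneg hg_int
  set D : (k : ℕ) → (Fin k → I) × (Fin k → ℝ) × (Fin k → ℝ) → ℝ := fun k z =>
    ‖jointCF ℙ X Y z.1 z.2.1 z.2.2 - margCF ℙ X z.1 z.2.1 * margCF ℙ Y z.1 z.2.2‖ ^ 2 with hDdef
  have hD : ∀ k z, D k z = (PhiG (ℙ.prod ℙ) (fun ω x => X ω.1 x - X ω.2 x)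
        (fun ω x => Y ω.1 x - Y ω.2 x) z).re
      + (PhiG ((ℙ.prod ℙ).prod (ℙ.prod ℙ)) (fun ω x => X ω.1.1 x - X ω.1.2 x)
        (fun ω x => Y ω.2.1 x - Y ω.2.2 x) z).re
      - 2 * (PhiG (ℙ.prod (ℙ.prod ℙ)) (fun ω x => X ω.1 x - X ω.2.1 x)
        (fun ω x => Y ω.1 x - Y ω.2.2 x) z).re := by
    intro k z
    rw [Phi1_eq, Phi2_eq, Phi3_eq, ← normsq_expand]
  have i1 := fun k => integrable_bdd (RG g k) _ (m1 k) (PhiG_norm _ _ _)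
  have i2 := fun k => integrable_bdd (RG g k) _ (m2 k) (PhiG_norm _ _ _)
  have i3 := fun k => integrable_bdd (RG g k) _ (m3 k) (PhiG_norm _ _ _)
  have hre : ∀ {k : ℕ} {f : (Fin k → I) × (Fin k → ℝ) × (Fin k → ℝ) → ℂ},
      Integrable f (RG g k) → Integrable (fun z => (f z).re) (RG g k) ∧
        ∫ z, (f z).re ∂(RG g k) = (∫ z, f z ∂(RG g k)).re := by
    intro k f hf
    exact ⟨hf.re, integral_re hf⟩
  have hDint : ∀ k, Integrable (D k) (RG g k) := by
    intro k
    rw [show D k = _ from funext (hD k)]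
    exact ((hre (i1 k)).1.add (hre (i2 k)).1).sub ((hre (i3 k)).1.const_mul 2)
  have hDval : ∀ k, ∫ z, D k z ∂(RG g k) = (∫ z, PhiG (ℙ.prod ℙ) (fun ω x => X ω.1 x - X ω.2 x)
        (fun ω x => Y ω.1 x - Y ω.2 x) z ∂(RG g k)).re
      + (∫ z, PhiG ((ℙ.prod ℙ).prod (ℙ.prod ℙ)) (fun ω x => X ω.1.1 x - X ω.1.2 x)
        (fun ω x => Y ω.2.1 x - Y ω.2.2 x) z ∂(RG g k)).re
      - 2 * (∫ z, PhiG (ℙ.prod (ℙ.prod ℙ)) (fun ω x => X ω.1 x - X ω.2.1 x)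
        (fun ω x => Y ω.1 x - Y ω.2.2 x) z ∂(RG g k)).re := by
    intro k
    simp only [hD k]
    exact integral_comb (RG g k) _ _ _ (i1 k) (i2 k) (i3 k)
  have hDmeas : ∀ k, Measurable (D k) := by
    intro k
    rw [show D k = _ from funext (hD k)]
    exact ((Complex.measurable_re.comp (m1 k)).add (Complex.measurable_re.comp (m2 k))).sub
      ((Complex.measurable_re.comp (m3 k)).const_mul 2)
  have hD0 : ∀ k z, 0 ≤ D k z := fun k z => sq_nonneg _
  have hS := (s1.add s2).sub (s3.mul_left 2)
  have hfun : ∀ k : ℕ, (1 / (k.factorial : ℝ)) * ∫ z, D k z ∂(RG g k) = _ := fun k => by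
    rw [hDval k, mul_sub, mul_add, mul_left_comm]
  have hS' := hS
  rw [← funext hfun] at hS'
  have hz : ∫ z, D 0 z ∂(RG g 0) = 0 := by
    simp [hDdef, jointCF, margCF]
  have hS1 := (hasSum_nat_add_iff' 1).mpr hS'
  simp only [Finset.range_one, Finset.sum_singleton, hz, mul_zero, sub_zero] at hS1
  have hS2 := hS1.mul_left (Real.exp (-1))
  have hcov : distCov ℙ X Y g = ∑' k : ℕ, ENNReal.ofReal (Real.exp (-1) *
      ((1 / ((k + 1).factorial : ℝ)) * ∫ z, D (k + 1) z ∂(RG g (k + 1)))) := by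
    unfold distCov
    congr 1; ext k
    rw [lintegral_RG g hg hg_nonneg hg_int (k + 1) (fun x s t => D (k + 1) (x, s, t))
      (hDmeas (k + 1)),
      ← ofReal_integral_eq_lintegral_ofReal (hDint (k + 1)) (ae_of_all _ (hD0 (k + 1))),
      ← ENNReal.ofReal_mul (by positivity)]
    congr 1; ring
  have hnn : ∀ k : ℕ, 0 ≤ Real.exp (-1) *
      ((1 / ((k + 1).factorial : ℝ)) * ∫ z, D (k + 1) z ∂(RG g (k + 1))) := by
    intro k
    have : 0 ≤ ∫ z, D (k + 1) z ∂(RG g (k + 1)) := integral_nonneg (fun z => hD0 (k + 1) z)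
    positivity
  rw [hcov, ← ENNReal.ofReal_tsum_of_nonneg hnn hS2.summable,
    ENNReal.toReal_ofReal (tsum_nonneg hnn), hS2.tsum_eq, ← mul_assoc, ← Real.exp_add]
  simp
end
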